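/- arXiv:0810.4766 — 3 statements merged into one kernel-verified Lean document; each statement's English description precedes it below -/
import Mathlib

section
/- For every integer k ≥ 2, the space Ĥₖ of homogeneous degree-k polynomial solutions of the Navier equations decomposes as the internal direct sum Ĥₖ = ψ(H_{k+1}) ⊕ Ĥ_{k,2} ⊕ φ(H_{k−1}) of ℝ-vector subspaces. -/
open MvPolynomial

/-- The Laplacian `Δ = ∑ᵣ ∂²_{xᵣ}` on `ℝ[x₁,…,xₙ]`. -/
noncomputable def lap {n : ℕ} (p : MvPolynomial (Fin n) ℝ) : MvPolynomial (Fin n) ℝ :=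
  ∑ r : Fin n, pderiv r (pderiv r p)

/-- The Navier operator `N(u)ⱼ = Δuⱼ + b·∂_{xⱼ}(∑ᵣ ∂_{xᵣ} uᵣ)`. -/
noncomputable def navier {n : ℕ} (b : ℝ) (u : Fin n → MvPolynomial (Fin n) ℝ) :
    Fin n → MvPolynomial (Fin n) ℝ :=
  fun j => lap (u j) + b • pderiv j (∑ r : Fin n, pderiv r (u r))

/-- The gradient map `ψ(f) = (∂_{x₁}f,…,∂_{xₙ}f)`. -/
noncomputable def gradPsi {n : ℕ} (f : MvPolynomial (Fin n) ℝ) :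
    Fin n → MvPolynomial (Fin n) ℝ :=
  fun j => pderiv j f

/-- `Ĥₖ` : homogeneous degree-`k` polynomial solutions of the Navier equations. -/
def memHhat {n : ℕ} (b : ℝ) (k : ℕ) (u : Fin n → MvPolynomial (Fin n) ℝ) : Prop :=
  (∀ j, (u j).IsHomogeneous k) ∧ navier b u = 0

/-- Membership in `ψ(H_{k+1})`. -/
def memPsiH {n : ℕ} (k : ℕ) (v : Fin n → MvPolynomial (Fin n) ℝ) : Prop :=
  ∃ f : MvPolynomial (Fin n) ℝ, f.IsHomogeneous (k + 1) ∧ lap f = 0 ∧ v = gradPsi f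

/-- `Ĥ_{k,2}` : tuples of degree-`k` harmonics `(f₁,…,fₙ)` with `∑ᵣ xᵣ fᵣ = 0`. -/
def memHk2 {n : ℕ} (k : ℕ) (w : Fin n → MvPolynomial (Fin n) ℝ) : Prop :=
  (∀ r, (w r).IsHomogeneous k ∧ lap (w r) = 0) ∧ (∑ r : Fin n, X r * w r) = 0

/-- `φ = φ₁ + c·φ₂` with
`φ₁(f) = (k−1)[(∑ᵣ xᵣ²)·ψ(f) − (2k+n−4)·f·(x₁,…,xₙ)]`,
`φ₂(f) = (∑ᵣ xᵣ²)·ψ(f)` and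
`c = (2k+n−2)(k+n−3)(k−1) / (2(b⁻¹(2k+n−4)+k−1))`. -/
noncomputable def phiMap {n : ℕ} (b : ℝ) (k : ℕ) (f : MvPolynomial (Fin n) ℝ) :
    Fin n → MvPolynomial (Fin n) ℝ :=
  fun j =>
    ((k : ℝ) - 1) • ((∑ r : Fin n, X r ^ 2) * pderiv j f
        - (2 * (k : ℝ) + n - 4) • (f * X j))
    + ((2 * (k : ℝ) + n - 2) * ((k : ℝ) + n - 3) * ((k : ℝ) - 1) /
          (2 * (b⁻¹ * (2 * (k : ℝ) + n - 4) + (k : ℝ) - 1))) •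
        ((∑ r : Fin n, X r ^ 2) * pderiv j f)

/-- Membership in `φ(H_{k-1})`. -/
def memPhiH {n : ℕ} (b : ℝ) (k : ℕ) (z : Fin n → MvPolynomial (Fin n) ℝ) : Prop :=
  ∃ f : MvPolynomial (Fin n) ℝ, f.IsHomogeneous (k - 1) ∧ lap f = 0 ∧ z = phiMap b k f

section Calculus

variable {n : ℕ}

theorem MvPolynomial.pderiv_comm {σ R : Type*} [CommRing R] (i j : σ) (p : MvPolynomial σ R) :
    pderiv i (pderiv j p) = pderiv j (pderiv i p) := by
  classical
  have h : ⁅pderiv (R := R) i, pderiv (R := R) j⁆ = 0 := by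
    apply MvPolynomial.derivation_ext
    intro l
    simp [Derivation.commutator_apply, pderiv_X, Pi.single_apply, apply_ite]
  have h' := congrArg (fun D => D p) h
  simpa [Derivation.commutator_apply, sub_eq_zero] using h'

/-- The Laplacian as a linear map. -/
noncomputable def laplacian (n : ℕ) : MvPolynomial (Fin n) ℝ →ₗ[ℝ] MvPolynomial (Fin n) ℝ where
  toFun := lap
  map_add' p q := by simp [lap, Finset.sum_add_distrib]
  map_smul' c p := by simp [lap, Finset.smul_sum]

@[simp] theorem laplacian_apply (p : MvPolynomial (Fin n) ℝ) : laplacian n p = lap p := rfl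

/-- The divergence `u ↦ ∑ᵣ ∂_{xᵣ} uᵣ` as a linear map. -/
noncomputable def divergence (n : ℕ) :
    (Fin n → MvPolynomial (Fin n) ℝ) →ₗ[ℝ] MvPolynomial (Fin n) ℝ where
  toFun u := ∑ r, pderiv r (u r)
  map_add' u v := by simp [Finset.sum_add_distrib]
  map_smul' c u := by simp [Finset.smul_sum]

theorem divergence_apply (u : Fin n → MvPolynomial (Fin n) ℝ) :
    divergence n u = ∑ r, pderiv r (u r) := rfl

/-- The radial component `u ↦ ∑ᵣ xᵣ uᵣ` as a linear map. -/
noncomputable def radial (n : ℕ) :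
    (Fin n → MvPolynomial (Fin n) ℝ) →ₗ[ℝ] MvPolynomial (Fin n) ℝ where
  toFun u := ∑ r, X r * u r
  map_add' u v := by simp [mul_add, Finset.sum_add_distrib]
  map_smul' c u := by simp [Finset.smul_sum]

theorem radial_apply (u : Fin n → MvPolynomial (Fin n) ℝ) :
    radial n u = ∑ r, X r * u r := rfl

theorem navier_apply (b : ℝ) (u : Fin n → MvPolynomial (Fin n) ℝ) (j : Fin n) :
    navier b u j = lap (u j) + b • pderiv j (divergence n u) := rfl

theorem lap_pderiv (j : Fin n) (p : MvPolynomial (Fin n) ℝ) :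
    lap (pderiv j p) = pderiv j (lap p) := by
  simp only [lap, map_sum, MvPolynomial.pderiv_comm _ j]

theorem divergence_gradPsi (f : MvPolynomial (Fin n) ℝ) : divergence n (gradPsi f) = lap f := rfl

theorem radial_gradPsi {f : MvPolynomial (Fin n) ℝ} {m : ℕ} (hf : f.IsHomogeneous m) :
    radial n (gradPsi f) = (m : ℝ) • f := by
  rw [radial_apply, Nat.cast_smul_eq_nsmul]
  exact hf.sum_X_mul_pderiv

theorem lap_mul (p q : MvPolynomial (Fin n) ℝ) :
    lap (p * q) = lap p * q + 2 * ∑ r, pderiv r p * pderiv r q + p * lap q := by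
  simp only [lap, pderiv_mul, map_add, Finset.sum_mul, Finset.mul_sum, ← Finset.sum_add_distrib]
  refine Finset.sum_congr rfl fun r _ => ?_
  ring

theorem lap_X_mul (j : Fin n) (p : MvPolynomial (Fin n) ℝ) :
    lap (X j * p) = 2 * pderiv j p + X j * lap p := by
  have h : lap (X j : MvPolynomial (Fin n) ℝ) = 0 := by
    simp [lap, pderiv_X, Pi.single_apply, apply_ite]
  simp [lap_mul, h, pderiv_X, Pi.single_apply]

theorem lap_radial (u : Fin n → MvPolynomial (Fin n) ℝ) :
    lap (radial n u) = 2 * divergence n u + radial n (fun r => lap (u r)) := by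
  rw [← laplacian_apply, radial_apply, map_sum]
  simp only [laplacian_apply, lap_X_mul, Finset.sum_add_distrib, divergence_apply, radial_apply,
    Finset.mul_sum]

theorem pderiv_sum_sq (j : Fin n) :
    pderiv j (∑ r, X r ^ 2 : MvPolynomial (Fin n) ℝ) = 2 * X j := by
  simp [pderiv_X, Pi.single_apply]

theorem lap_sum_sq : lap (∑ r, X r ^ 2 : MvPolynomial (Fin n) ℝ) = 2 * n := by
  simp only [lap, pderiv_sum_sq]
  simp [mul_comm, ← map_ofNat (C : ℝ →+* MvPolynomial (Fin n) ℝ)]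

theorem lap_sum_sq_mul (p : MvPolynomial (Fin n) ℝ) :
    lap ((∑ r, X r ^ 2) * p) =
      2 * (n : MvPolynomial (Fin n) ℝ) * p + 4 * radial n (gradPsi p) + (∑ r, X r ^ 2) * lap p := by
  rw [lap_mul, lap_sum_sq]
  simp only [pderiv_sum_sq, radial_apply, gradPsi, mul_assoc, ← Finset.mul_sum]
  ring

theorem divergence_mul (p : MvPolynomial (Fin n) ℝ) (u : Fin n → MvPolynomial (Fin n) ℝ) :
    divergence n (fun j => p * u j) = ∑ r, pderiv r p * u r + p * divergence n u := by
  simp only [divergence_apply, pderiv_mul, Finset.sum_add_distrib, Finset.mul_sum]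

theorem divergence_sum_sq_mul_gradPsi (f : MvPolynomial (Fin n) ℝ) :
    divergence n (fun j => (∑ r, X r ^ 2) * gradPsi f j) =
      2 * radial n (gradPsi f) + (∑ r, X r ^ 2) * lap f := by
  rw [divergence_mul, divergence_gradPsi]
  simp only [pderiv_sum_sq, radial_apply, mul_assoc, ← Finset.mul_sum]

theorem divergence_mul_X (f : MvPolynomial (Fin n) ℝ) :
    divergence n (fun j => f * X j) = radial n (gradPsi f) + n * f := by
  rw [divergence_mul f X]
  simp [divergence_apply, radial_apply, gradPsi, mul_comm]

theorem MvPolynomial.IsHomogeneous.smul {σ : Type*} {p : MvPolynomial σ ℝ} {m : ℕ}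
    (hp : p.IsHomogeneous m) (c : ℝ) : (c • p).IsHomogeneous m :=
  (homogeneousSubmodule σ ℝ m).smul_mem c hp

theorem divergence_isHomogeneous {u : Fin n → MvPolynomial (Fin n) ℝ} {m : ℕ}
    (hu : ∀ j, (u j).IsHomogeneous m) : (divergence n u).IsHomogeneous (m - 1) :=
  .sum _ _ _ fun r _ => (hu r).pderiv

theorem radial_isHomogeneous {u : Fin n → MvPolynomial (Fin n) ℝ} {m : ℕ}
    (hu : ∀ j, (u j).IsHomogeneous m) : (radial n u).IsHomogeneous (m + 1) :=
  .sum _ _ _ fun r _ => add_comm 1 m ▸ (isHomogeneous_X ℝ r).mul (hu r)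

end Calculus

section Navier

variable {n : ℕ} {b : ℝ} {k : ℕ}

theorem navier_sub (u v : Fin n → MvPolynomial (Fin n) ℝ) :
    navier b (u - v) = navier b u - navier b v := by
  funext j
  simp only [Pi.sub_apply, navier_apply, map_sub, ← laplacian_apply, smul_sub]
  abel

theorem divergence_navier (u : Fin n → MvPolynomial (Fin n) ℝ) :
    divergence n (navier b u) = (1 + b) • lap (divergence n u) := by
  rw [divergence_apply]
  simp only [navier_apply, map_add, Derivation.map_smul, Finset.sum_add_distrib, ← lap_pderiv,
    ← Finset.smul_sum, add_smul, one_smul]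
  simp only [← laplacian_apply, ← map_sum]
  rfl

theorem lap_divergence_eq_zero (hb1 : 0 < b + 1) {u : Fin n → MvPolynomial (Fin n) ℝ}
    (hu : navier b u = 0) : lap (divergence n u) = 0 := by
  have h := divergence_navier (b := b) u
  rw [hu, map_zero] at h
  exact (smul_eq_zero.mp h.symm).resolve_left (by linarith)

theorem memHhat_of_harmonic {u : Fin n → MvPolynomial (Fin n) ℝ}
    (hu : ∀ j, (u j).IsHomogeneous k) (hlap : ∀ j, lap (u j) = 0) (hdiv : divergence n u = 0) :
    memHhat b k u := by
  refine ⟨hu, funext fun j => ?_⟩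
  simp [navier_apply, hlap, hdiv]

theorem memHk2.divergence_eq_zero {w : Fin n → MvPolynomial (Fin n) ℝ} (hw : memHk2 k w) :
    divergence n w = 0 := by
  have h := lap_radial w
  have h0 : radial n w = 0 := hw.2
  rw [h0, ← laplacian_apply, map_zero] at h
  simpa [hw.1, radial_apply] using h

theorem memPsiH.divergence_eq_zero {v : Fin n → MvPolynomial (Fin n) ℝ} (hv : memPsiH k v) :
    divergence n v = 0 := by
  obtain ⟨f, -, hf, rfl⟩ := hv
  rw [divergence_gradPsi, hf]

theorem memPsiH.memHhat {v : Fin n → MvPolynomial (Fin n) ℝ} (hv : memPsiH k v) :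
    memHhat b k v := by
  have hdiv := hv.divergence_eq_zero
  obtain ⟨f, hhom, hf, rfl⟩ := hv
  refine memHhat_of_harmonic (fun j => hhom.pderiv) (fun j => ?_) hdiv
  rw [gradPsi, lap_pderiv, hf, map_zero]

theorem memHk2.memHhat {w : Fin n → MvPolynomial (Fin n) ℝ} (hw : memHk2 k w) :
    memHhat b k w :=
  memHhat_of_harmonic (fun j => (hw.1 j).1) (fun j => (hw.1 j).2) hw.divergence_eq_zero

/-- The coefficient `c` in `φ = φ₁ + c·φ₂`. -/
noncomputable def phiCoeff (n : ℕ) (b : ℝ) (k : ℕ) : ℝ :=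
  (2 * (k : ℝ) + n - 2) * ((k : ℝ) + n - 3) * ((k : ℝ) - 1) /
    (2 * (b⁻¹ * (2 * (k : ℝ) + n - 4) + (k : ℝ) - 1))

theorem phiMap_apply (f : MvPolynomial (Fin n) ℝ) (j : Fin n) :
    phiMap b k f j = ((k : ℝ) - 1 + phiCoeff n b k) • ((∑ r, X r ^ 2) * gradPsi f j) -
      (((k : ℝ) - 1) * (2 * (k : ℝ) + n - 4)) • (f * X j) := by
  simp only [phiMap, phiCoeff, gradPsi]
  module

theorem phiMap_eq (f : MvPolynomial (Fin n) ℝ) :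
    phiMap b k f =
      ((k : ℝ) - 1 + phiCoeff n b k) • (fun j => (∑ r, X r ^ 2) * gradPsi f j) -
        (((k : ℝ) - 1) * (2 * (k : ℝ) + n - 4)) • (fun j => f * X j) :=
  funext fun j => phiMap_apply f j

theorem phiMap_isHomogeneous (hk : 2 ≤ k) {f : MvPolynomial (Fin n) ℝ}
    (hf : f.IsHomogeneous (k - 1)) (j : Fin n) : (phiMap b k f j).IsHomogeneous k := by
  have hsq : (∑ r, X r ^ 2 : MvPolynomial (Fin n) ℝ).IsHomogeneous 2 :=
    .sum _ _ _ fun r _ => isHomogeneous_X_pow r 2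
  rw [phiMap_apply]
  refine .sub (.smul ?_ _) (.smul ?_ _)
  · convert! hsq.mul (hf.pderiv (i := j)) using 1
    omega
  · convert! hf.mul (isHomogeneous_X ℝ j) using 1
    omega

theorem phi_denominator_ne_zero (hn : 3 ≤ n) (hb : b ≠ 0) (hb1 : 0 < b + 1) (hk : 2 ≤ k) :
    b⁻¹ * (2 * (k : ℝ) + n - 4) + (k : ℝ) - 1 ≠ 0 := by
  have hn' : (3 : ℝ) ≤ n := by exact_mod_cast hn
  have hk' : (2 : ℝ) ≤ k := by exact_mod_cast hk
  intro h
  have h' : (2 * (k : ℝ) + n - 4) + b * ((k : ℝ) - 1) = 0 := by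
    field_simp at h
    linarith
  nlinarith [mul_pos hb1 (by linarith : (0 : ℝ) < k - 1)]

theorem phiCoeff_ne_zero (hn : 3 ≤ n) (hb : b ≠ 0) (hb1 : 0 < b + 1) (hk : 2 ≤ k) :
    phiCoeff n b k ≠ 0 := by
  have hn' : (3 : ℝ) ≤ n := by exact_mod_cast hn
  have hk' : (2 : ℝ) ≤ k := by exact_mod_cast hk
  refine div_ne_zero (mul_ne_zero (mul_ne_zero ?_ ?_) ?_)
    (mul_ne_zero two_ne_zero (phi_denominator_ne_zero hn hb hb1 hk))
  all_goals apply ne_of_gt; linarith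

theorem phiCoeff_equation (hn : 3 ≤ n) (hb : b ≠ 0) (hb1 : 0 < b + 1) (hk : 2 ≤ k) :
    phiCoeff n b k * (2 * (b⁻¹ * (2 * (k : ℝ) + n - 4) + (k : ℝ) - 1)) =
      (2 * (k : ℝ) + n - 2) * ((k : ℝ) + n - 3) * ((k : ℝ) - 1) :=
  div_mul_cancel₀ _ (mul_ne_zero two_ne_zero (phi_denominator_ne_zero hn hb hb1 hk))

/-- The factor `λ` with `div (φ f) = λ f` for harmonic `f` of degree `k - 1`. -/
noncomputable def phiDivFactor (n : ℕ) (b : ℝ) (k : ℕ) : ℝ :=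
  -(2 * b⁻¹ * (2 * (k : ℝ) + n - 4) * phiCoeff n b k)

theorem phiDivFactor_ne_zero (hn : 3 ≤ n) (hb : b ≠ 0) (hb1 : 0 < b + 1) (hk : 2 ≤ k) :
    phiDivFactor n b k ≠ 0 := by
  have hn' : (3 : ℝ) ≤ n := by exact_mod_cast hn
  have hk' : (2 : ℝ) ≤ k := by exact_mod_cast hk
  have h : 2 * (k : ℝ) + n - 4 ≠ 0 := by apply ne_of_gt; linarith
  exact neg_ne_zero.mpr (mul_ne_zero (mul_ne_zero (mul_ne_zero two_ne_zero (inv_ne_zero hb)) h)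
    (phiCoeff_ne_zero hn hb hb1 hk))

theorem divergence_phiMap (hn : 3 ≤ n) (hb : b ≠ 0) (hb1 : 0 < b + 1) (hk : 2 ≤ k)
    {f : MvPolynomial (Fin n) ℝ} (hf : f.IsHomogeneous (k - 1)) (hlap : lap f = 0) :
    divergence n (phiMap b k f) = phiDivFactor n b k • f := by
  rw [phiMap_eq, map_sub, map_smul, map_smul, divergence_sum_sq_mul_gradPsi, divergence_mul_X,
    radial_gradPsi hf, hlap, Nat.cast_sub (by omega), Nat.cast_one]
  have hc := phiCoeff_equation hn hb hb1 hk
  have htwo : (2 : MvPolynomial (Fin n) ℝ) * (((k : ℝ) - 1) • f) = (2 * ((k : ℝ) - 1)) • f := by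
    rw [mul_smul, ofNat_smul_eq_nsmul, nsmul_eq_mul, Nat.cast_ofNat]
  have hcast : (n : MvPolynomial (Fin n) ℝ) * f = (n : ℝ) • f := by
    rw [Nat.cast_smul_eq_nsmul, nsmul_eq_mul]
  rw [htwo, hcast, mul_zero, add_zero, ← add_smul, smul_smul, smul_smul, ← sub_smul]
  congr 1
  rw [phiDivFactor]
  linear_combination hc

theorem lap_phiMap (hk : 2 ≤ k) {f : MvPolynomial (Fin n) ℝ}
    (hf : f.IsHomogeneous (k - 1)) (hlap : lap f = 0) (j : Fin n) :
    lap (phiMap b k f j) = (2 * (2 * (k : ℝ) + n - 4) * phiCoeff n b k) • pderiv j f := by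
  have hgrad : (gradPsi f j).IsHomogeneous (k - 2) := hf.pderiv
  have hlapgrad : lap (gradPsi f j) = 0 := by rw [gradPsi, lap_pderiv, hlap, map_zero]
  rw [phiMap_apply, ← laplacian_apply, map_sub, map_smul, map_smul, laplacian_apply,
    laplacian_apply, lap_sum_sq_mul, radial_gradPsi hgrad, hlapgrad, mul_comm f, lap_X_mul, hlap,
    Nat.cast_sub hk]
  simp only [gradPsi, MvPolynomial.smul_eq_C_mul, map_mul, map_add, map_sub, map_natCast,
    map_ofNat, map_one, Nat.cast_ofNat]
  ring

theorem memPhiH.memHhat (hn : 3 ≤ n) (hb : b ≠ 0) (hb1 : 0 < b + 1) (hk : 2 ≤ k)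
    {z : Fin n → MvPolynomial (Fin n) ℝ} (hz : memPhiH b k z) : memHhat b k z := by
  obtain ⟨f, hhom, hf, rfl⟩ := hz
  refine ⟨phiMap_isHomogeneous hk hhom, funext fun j => ?_⟩
  rw [navier_apply, lap_phiMap hk hhom hf, divergence_phiMap hn hb hb1 hk hhom hf,
    Derivation.map_smul, smul_smul, ← add_smul, phiDivFactor, Pi.zero_apply]
  convert zero_smul ℝ _ using 2
  field_simp
  ring

theorem exists_decomposition (hn : 3 ≤ n) (hb : b ≠ 0) (hb1 : 0 < b + 1) (hk : 2 ≤ k)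
    {u : Fin n → MvPolynomial (Fin n) ℝ} (hu : memHhat b k u) :
    ∃ v w z, memPsiH k v ∧ memHk2 k w ∧ memPhiH b k z ∧ u = v + w + z := by
  have hfactor := phiDivFactor_ne_zero hn hb hb1 hk
  set f := (phiDivFactor n b k)⁻¹ • divergence n u with hf_def
  have hf : f.IsHomogeneous (k - 1) := (divergence_isHomogeneous hu.1).smul _
  have hlapf : lap f = 0 := by
    rw [hf_def, ← laplacian_apply, map_smul, laplacian_apply, lap_divergence_eq_zero hb1 hu.2,
      smul_zero]
  have hz : memPhiH b k (phiMap b k f) := ⟨f, hf, hlapf, rfl⟩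
  set s := u - phiMap b k f with hs_def
  have hs : ∀ j, (s j).IsHomogeneous k := fun j => (hu.1 j).sub (phiMap_isHomogeneous hk hf j)
  have hdiv : divergence n s = 0 := by
    rw [hs_def, map_sub, divergence_phiMap hn hb hb1 hk hf hlapf, hf_def,
      smul_inv_smul₀ hfactor, sub_self]
  have hlap : ∀ j, lap (s j) = 0 := fun j => by
    have h : navier b s j = 0 := by
      rw [hs_def, navier_sub, hu.2, (hz.memHhat hn hb hb1 hk).2, sub_zero, Pi.zero_apply]
    simpa [navier_apply, hdiv] using h
  set h := ((k + 1 : ℕ) : ℝ)⁻¹ • radial n s with hh_def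
  have hh : h.IsHomogeneous (k + 1) := (radial_isHomogeneous hs).smul _
  have hlaph : lap h = 0 := by
    rw [hh_def, ← laplacian_apply, map_smul, laplacian_apply, lap_radial, hdiv]
    simp [hlap, radial_apply]
  have hk0 : ((k + 1 : ℕ) : ℝ) ≠ 0 := Nat.cast_ne_zero.mpr k.succ_ne_zero
  refine ⟨gradPsi h, s - gradPsi h, phiMap b k f, ⟨h, hh, hlaph, rfl⟩,
    ⟨fun r => ⟨(hs r).sub hh.pderiv, ?_⟩, ?_⟩, hz, ?_⟩
  · rw [Pi.sub_apply, ← laplacian_apply, map_sub, laplacian_apply, laplacian_apply, hlap, gradPsi,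
      lap_pderiv, hlaph, map_zero, sub_zero]
  · rw [← radial_apply, map_sub, radial_gradPsi hh, hh_def, smul_inv_smul₀ hk0, sub_self]
  · rw [add_sub_cancel, hs_def, sub_add_cancel]

theorem decomposition_unique (hn : 3 ≤ n) (hb : b ≠ 0) (hb1 : 0 < b + 1) (hk : 2 ≤ k)
    {v w z v' w' z' : Fin n → MvPolynomial (Fin n) ℝ} (hv : memPsiH k v) (hw : memHk2 k w)
    (hz : memPhiH b k z) (hv' : memPsiH k v') (hw' : memHk2 k w') (hz' : memPhiH b k z')
    (h : v + w + z = v' + w' + z') : v = v' ∧ w = w' ∧ z = z' := by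
  have hzz : z = z' := by
    have hdiv := congrArg (divergence n) h
    simp only [map_add, hv.divergence_eq_zero, hw.divergence_eq_zero, hv'.divergence_eq_zero,
      hw'.divergence_eq_zero, zero_add] at hdiv
    obtain ⟨f, hf, hlap, rfl⟩ := hz
    obtain ⟨f', hf', hlap', rfl⟩ := hz'
    rw [divergence_phiMap hn hb hb1 hk hf hlap, divergence_phiMap hn hb hb1 hk hf' hlap'] at hdiv
    rw [smul_right_injective _ (phiDivFactor_ne_zero hn hb hb1 hk) hdiv]
  subst hzz
  have hvw := add_right_cancel h
  have hvv : v = v' := by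
    have hrad := congrArg (radial n) hvw
    have hw0 : radial n w = 0 := hw.2
    have hw0' : radial n w' = 0 := hw'.2
    rw [map_add, map_add, hw0, hw0', add_zero, add_zero] at hrad
    obtain ⟨f, hf, -, rfl⟩ := hv
    obtain ⟨f', hf', -, rfl⟩ := hv'
    rw [radial_gradPsi hf, radial_gradPsi hf'] at hrad
    rw [smul_right_injective _ (Nat.cast_ne_zero.mpr k.succ_ne_zero) hrad]
  subst hvv
  exact ⟨rfl, add_left_cancel hvw, rfl⟩

end Navier

/-- for `k ≥ 2`, `Ĥₖ = ψ(H_{k+1}) ⊕ Ĥ_{k,2} ⊕ φ(H_{k−1})` as an internal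
direct sum of ℝ-subspaces: each summand lies in `Ĥₖ` and every element of `Ĥₖ` is
uniquely the sum of elements of the three summands. -/
theorem navier_Hhat_decomposition (n : ℕ) (hn : 3 ≤ n) (b : ℝ) (hb : b ≠ 0)
    (hb1 : 0 < b + 1) (k : ℕ) (hk : 2 ≤ k) :
    (∀ v : Fin n → MvPolynomial (Fin n) ℝ, memPsiH k v → memHhat b k v) ∧
    (∀ w : Fin n → MvPolynomial (Fin n) ℝ, memHk2 k w → memHhat b k w) ∧
    (∀ z : Fin n → MvPolynomial (Fin n) ℝ, memPhiH b k z → memHhat b k z) ∧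
    (∀ u : Fin n → MvPolynomial (Fin n) ℝ, memHhat b k u →
      ∃! p : (Fin n → MvPolynomial (Fin n) ℝ) × (Fin n → MvPolynomial (Fin n) ℝ) ×
          (Fin n → MvPolynomial (Fin n) ℝ),
        memPsiH k p.1 ∧ memHk2 k p.2.1 ∧ memPhiH b k p.2.2 ∧
          u = p.1 + p.2.1 + p.2.2) := by
  refine ⟨fun v hv => hv.memHhat, fun w hw => hw.memHhat,
    fun z hz => hz.memHhat hn hb hb1 hk, fun u hu => ?_⟩
  obtain ⟨v, w, z, hv, hw, hz, rfl⟩ := exists_decomposition hn hb hb1 hk hu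
  refine ⟨(v, w, z), ⟨hv, hw, hz, rfl⟩, ?_⟩
  rintro ⟨v', w', z'⟩ ⟨hv', hw', hz', h⟩
  obtain ⟨rfl, rfl, rfl⟩ := decomposition_unique hn hb hb1 hk hv hw hz hv' hw' hz' h
  rfl
end

section
/- For every integer k ≥ 2 and every harmonic homogeneous polynomial h of degree k−1, the n-tuple φ(h) = φ₁(h) + c·φ₂(h) is a homogeneous degree-k polynomial solution of the Navier equations, i.e. φ(H_{k−1}) ⊆ Ĥₖ. -/
open MvPolynomial

namespace MvPolynomial

/-- Partial derivatives commute. -/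
theorem pderiv_pderiv_comm {σ R : Type*} [CommRing R] (i j : σ) (p : MvPolynomial σ R) :
    pderiv i (pderiv j p) = pderiv j (pderiv i p) := by
  classical
  have hcomm : ⁅pderiv (R := R) i, pderiv (R := R) j⁆ = 0 := by
    refine derivation_ext fun r => ?_
    rw [Derivation.commutator_apply, pderiv_X, pderiv_X]
    simp [Pi.single_apply, apply_ite]
  have happ := congrArg (fun D => D p) hcomm
  rwa [Derivation.commutator_apply, Derivation.zero_apply, sub_eq_zero] at happ

theorem pderiv_sum_X_sq {σ R : Type*} [Fintype σ] [CommRing R] (i : σ) :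
    pderiv i (∑ r : σ, X r ^ 2 : MvPolynomial σ R) = 2 * X i := by
  classical
  simp [pderiv_X, Pi.single_apply]

end MvPolynomial

section Laplacian

variable {n : ℕ}

theorem lap_add (p q : MvPolynomial (Fin n) ℝ) : lap (p + q) = lap p + lap q := by
  simp [lap, Finset.sum_add_distrib]

theorem lap_smul (a : ℝ) (p : MvPolynomial (Fin n) ℝ) : lap (a • p) = a • lap p := by
  simp [lap, Finset.smul_sum]

theorem lap_sub (p q : MvPolynomial (Fin n) ℝ) : lap (p - q) = lap p - lap q := by
  simp [lap, Finset.sum_sub_distrib]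

theorem lap_sum_X_sq : lap (∑ r : Fin n, X r ^ 2) = 2 * (n : MvPolynomial (Fin n) ℝ) := by
  have hr (r : Fin n) : pderiv r (2 * X r : MvPolynomial (Fin n) ℝ) = 2 := by
    rw [two_mul, map_add, pderiv_X_self, one_add_one_eq_two]
  simp only [lap, pderiv_sum_X_sq, hr]
  simp [mul_comm]

/-- `Δ(|x|² g) = 2(n + 2d) g` for `g` harmonic and homogeneous of degree `d`. -/
theorem lap_sum_X_sq_mul {d : ℕ} {g : MvPolynomial (Fin n) ℝ} (hg : g.IsHomogeneous d)
    (hharm : lap g = 0) :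
    lap ((∑ r, X r ^ 2) * g) = (2 * ((n : ℝ) + 2 * d)) • g := by
  simp only [lap_mul, lap_sum_X_sq, hharm, pderiv_sum_X_sq, mul_assoc, ← Finset.mul_sum,
    hg.sum_X_mul_pderiv]
  simp only [smul_eq_C_mul, map_mul, map_add, map_ofNat, map_natCast, nsmul_eq_mul]
  ring

/-- `Δ(f xⱼ) = 2 ∂ⱼf` for `f` harmonic. -/
theorem lap_mul_X {f : MvPolynomial (Fin n) ℝ} (hharm : lap f = 0) (j : Fin n) :
    lap (f * X j) = (2 : ℝ) • pderiv j f := by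
  have hX : lap (X j : MvPolynomial (Fin n) ℝ) = 0 := by
    simp [lap, pderiv_X, Pi.single_apply, apply_ite]
  simp [lap_mul, hharm, hX, pderiv_X, Pi.single_apply, smul_eq_C_mul, map_ofNat C]

/-- `div(|x|² ∇f) = 2d f` for `f` harmonic and homogeneous of degree `d`. -/
theorem sum_pderiv_sum_X_sq_mul_pderiv {d : ℕ} {f : MvPolynomial (Fin n) ℝ}
    (hf : f.IsHomogeneous d) (hharm : lap f = 0) :
    ∑ j, pderiv j ((∑ r, X r ^ 2) * pderiv j f) = (2 * (d : ℝ)) • f := by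
  rw [lap] at hharm
  simp only [pderiv_mul, pderiv_sum_X_sq, Finset.sum_add_distrib, ← Finset.mul_sum, hharm,
    mul_assoc, hf.sum_X_mul_pderiv]
  simp [smul_eq_C_mul, mul_assoc, map_ofNat C]

/-- `div(f x) = (d + n) f` for `f` homogeneous of degree `d`. -/
theorem sum_pderiv_mul_X {d : ℕ} {f : MvPolynomial (Fin n) ℝ} (hf : f.IsHomogeneous d) :
    ∑ j, pderiv j (f * X j) = ((d : ℝ) + n) • f := by
  simp only [pderiv_mul, pderiv_X_self, Finset.sum_add_distrib, mul_comm _ (X _),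
    hf.sum_X_mul_pderiv]
  simp [smul_eq_C_mul, add_mul, add_comm]

end Laplacian

/-- for `k ≥ 2` and every harmonic homogeneous polynomial `h` of degree
`k−1`, `φ(h)` is a homogeneous degree-`k` polynomial solution of the Navier equations,
i.e. `φ(H_{k−1}) ⊆ Ĥₖ`. -/
theorem phi_mem_Hhat (n : ℕ) (hn : 3 ≤ n) (b : ℝ) (hb : b ≠ 0) (hb1 : 0 < b + 1)
    (k : ℕ) (hk : 2 ≤ k) (h : MvPolynomial (Fin n) ℝ)
    (hh : h.IsHomogeneous (k - 1)) (hharm : lap h = 0) :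
    (∀ j, (phiMap b k h j).IsHomogeneous k) ∧ navier b (phiMap b k h) = 0 := by
  obtain ⟨m, rfl⟩ : ∃ m, k = m + 2 := ⟨k - 2, by omega⟩
  rw [show m + 2 - 1 = m + 1 by omega] at hh
  have hgrad (j : Fin n) : (pderiv j h).IsHomogeneous m := by simpa using hh.pderiv (i := j)
  have hsq : (∑ r : Fin n, X r ^ 2 : MvPolynomial (Fin n) ℝ).IsHomogeneous 2 :=
    IsHomogeneous.sum _ _ _ fun r _ => isHomogeneous_X_pow r 2
  constructor
  · intro j
    have hrad : ((∑ r, X r ^ 2) * pderiv j h).IsHomogeneous (m + 2) :=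
      add_comm 2 m ▸ hsq.mul (hgrad j)
    have hpos : (h * X j).IsHomogeneous (m + 2) := hh.mul (isHomogeneous_X ℝ j)
    rw [← mem_homogeneousSubmodule] at *
    exact add_mem (Submodule.smul_mem _ _ (sub_mem hrad (Submodule.smul_mem _ _ hpos)))
      (Submodule.smul_mem _ _ hrad)
  · funext j
    have hn' : (3 : ℝ) ≤ n := by exact_mod_cast hn
    have hm : (0 : ℝ) ≤ m := Nat.cast_nonneg m
    have hden : (2 * (m : ℝ) + n) + b * (m + 1) ≠ 0 := by nlinarith
    have hharm' : lap (pderiv j h) = 0 := by rw [lap_pderiv, hharm, map_zero]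
    simp only [navier, phiMap, lap_add, lap_smul, lap_sub, lap_sum_X_sq_mul (hgrad j) hharm',
      lap_mul_X hharm, map_add, map_sub, Derivation.map_smul, Finset.sum_add_distrib,
      Finset.sum_sub_distrib, ← Finset.smul_sum, sum_pderiv_sum_X_sq_mul_pderiv hh hharm,
      sum_pderiv_mul_X hh, Pi.zero_apply]
    match_scalars
    have hden' : b⁻¹ * (2 * ((m : ℝ) + 2) + n - 4) + (m + 2) - 1 ≠ 0 := by
      rw [show b⁻¹ * (2 * ((m : ℝ) + 2) + n - 4) + (m + 2) - 1
        = b⁻¹ * ((2 * (m : ℝ) + n) + b * (m + 1)) by field_simp; ring]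
      exact mul_ne_zero (inv_ne_zero hb) hden
    generalize hc : (2 * ((m : ℝ) + 2) + n - 2) * ((m : ℝ) + 2 + n - 3) * ((m : ℝ) + 2 - 1) /
      (2 * (b⁻¹ * (2 * ((m : ℝ) + 2) + n - 4) + (m + 2) - 1)) = c
    rw [div_eq_iff (mul_ne_zero two_ne_zero hden')] at hc
    have hbb : b * b⁻¹ = 1 := mul_inv_cancel₀ hb
    linear_combination (-b) * hc - 2 * c * (2 * m + n) * hbb
end

section
/- Let n ≥ 4 and let p, q, r, s be four pairwise distinct indices in {1,…,n}, and let k ≥ 1. The n-tuple of complex polynomials u = −(x_r + i x_s)(x_p + i x_q)^{k−1}·(ς_p + i ς_q) + (x_p + i x_q)^k·(ς_r + i ς_s), where ς_j is the j-th standard basis vector, satisfies the complex Navier equations: Δu_j + b·∂_{x_j}(∑_l ∂_{x_l} u_l) = 0 for all j. -/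
open MvPolynomial

/-- The Laplacian `Δ = ∑ᵣ ∂²_{xᵣ}` on `ℂ[x₁,…,xₙ]`. -/
noncomputable def lapC {n : ℕ} (p : MvPolynomial (Fin n) ℂ) : MvPolynomial (Fin n) ℂ :=
  ∑ r : Fin n, pderiv r (pderiv r p)

/-- The complexified Navier operator `N(u)ⱼ = Δuⱼ + b·∂_{xⱼ}(∑ᵣ ∂_{xᵣ} uᵣ)`. -/
noncomputable def navierC {n : ℕ} (b : ℝ) (u : Fin n → MvPolynomial (Fin n) ℂ) :
    Fin n → MvPolynomial (Fin n) ℂ :=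
  fun j => lapC (u j) + C (b : ℂ) * pderiv j (∑ r : Fin n, pderiv r (u r))

/-- The `j`-th standard basis vector `ς_j` (as a tuple of polynomials). -/
noncomputable def sigmaV {n : ℕ} (j : Fin n) : Fin n → MvPolynomial (Fin n) ℂ :=
  fun r => if r = j then 1 else 0

/-- The inner product of gradients `∇f · ∇g = ∑ₗ ∂ₗf ∂ₗg`. -/
noncomputable def gradInner {n : ℕ} (f g : MvPolynomial (Fin n) ℂ) : MvPolynomial (Fin n) ℂ :=
  ∑ l : Fin n, pderiv l f * pderiv l g

theorem lapC_add {n : ℕ} (f g : MvPolynomial (Fin n) ℂ) : lapC (f + g) = lapC f + lapC g := by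
  simp [lapC, Finset.sum_add_distrib]

theorem lapC_neg {n : ℕ} (f : MvPolynomial (Fin n) ℂ) : lapC (-f) = -lapC f := by
  simp [lapC]

theorem lapC_mul {n : ℕ} (f g : MvPolynomial (Fin n) ℂ) :
    lapC (f * g) = lapC f * g + 2 * gradInner f g + f * lapC g := by
  simp only [lapC, gradInner, Finset.mul_sum, Finset.sum_mul, ← Finset.sum_add_distrib]
  refine Finset.sum_congr rfl fun l _ => ?_
  simp only [Derivation.leibniz, map_add, smul_eq_mul]
  ring

theorem gradInner_pow_right {n : ℕ} (f g : MvPolynomial (Fin n) ℂ) (m : ℕ) :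
    gradInner f (g ^ m) = m * g ^ (m - 1) * gradInner f g := by
  simp only [gradInner, Finset.mul_sum]
  refine Finset.sum_congr rfl fun l _ => ?_
  simp only [Derivation.leibniz_pow, smul_eq_mul, nsmul_eq_mul]
  ring

theorem lapC_pow_eq_zero {n : ℕ} {f : MvPolynomial (Fin n) ℂ} (hf : lapC f = 0)
    (hff : gradInner f f = 0) (m : ℕ) : lapC (f ^ m) = 0 := by
  induction m with
  | zero => simp [lapC]
  | succ m ih =>
    rw [pow_succ', lapC_mul, hf, ih, gradInner_pow_right, hff]
    ring

theorem pderiv_sigmaV {n : ℕ} (l p j : Fin n) : pderiv l (sigmaV p j) = 0 := by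
  unfold sigmaV
  split_ifs <;> simp

theorem pderiv_X_add_I_mul_X {n : ℕ} (l p q : Fin n) :
    pderiv l (X p + C Complex.I * X q : MvPolynomial (Fin n) ℂ) =
      sigmaV p l + C Complex.I * sigmaV q l := by
  simp [sigmaV, pderiv_X, Pi.single_apply, eq_comm]

theorem C_I_mul_C_I {n : ℕ} :
    (C Complex.I * C Complex.I : MvPolynomial (Fin n) ℂ) = -1 := by
  rw [← C_mul, Complex.I_mul_I, C_neg, C_1]

theorem sum_sigmaV_mul {n : ℕ} (p : Fin n) (f : Fin n → MvPolynomial (Fin n) ℂ) :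
    ∑ l, sigmaV p l * f l = f p := by
  simp [sigmaV]

theorem gradInner_X_add_I_mul_X {n : ℕ} (p q r s : Fin n) :
    gradInner (X p + C Complex.I * X q : MvPolynomial (Fin n) ℂ) (X r + C Complex.I * X s) =
      sigmaV r p - sigmaV s q + C Complex.I * (sigmaV s p + sigmaV r q) := by
  simp only [gradInner, pderiv_X_add_I_mul_X, add_mul, Finset.sum_add_distrib, mul_assoc,
    ← Finset.mul_sum, sum_sigmaV_mul]
  linear_combination sigmaV s q * C_I_mul_C_I

/-- If `z`, `w` have constant, mutually orthogonal gradients and `∇z` is isotropic, then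
`-(w zᵐ) ∇z + zᵐ⁺¹ ∇w` solves the Navier equations. -/
theorem navierC_isotropic_eq_zero {n : ℕ} (b : ℝ) {z w : MvPolynomial (Fin n) ℂ}
    (hz : ∀ l j, pderiv l (pderiv j z) = 0) (hw : ∀ l j, pderiv l (pderiv j w) = 0)
    (hzz : gradInner z z = 0) (hwz : gradInner w z = 0) (m : ℕ) (j : Fin n) :
    navierC b (fun l => -(w * z ^ m) * pderiv l z + z ^ (m + 1) * pderiv l w) j = 0 := by
  have hlz : lapC z = 0 := by simp [lapC, hz]
  have hlw : lapC w = 0 := by simp [lapC, hw]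
  have lapC_mul_pderiv : ∀ f g : MvPolynomial (Fin n) ℂ, (∀ l j, pderiv l (pderiv j g) = 0) →
      lapC (f * pderiv j g) = lapC f * pderiv j g := by
    intro f g hg
    simp [lapC, hg, Finset.mul_sum, mul_comm]
  have hdiv : ∑ l, pderiv l (-(w * z ^ m) * pderiv l z + z ^ (m + 1) * pderiv l w) = 0 := by
    have hsum : ∑ l, pderiv l (-(w * z ^ m) * pderiv l z + z ^ (m + 1) * pderiv l w) =
        -(z ^ m * gradInner w z) - w * (m * z ^ (m - 1)) * gradInner z z +
          (m + 1) * z ^ m * gradInner w z := by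
      simp only [gradInner, Finset.mul_sum, ← Finset.sum_neg_distrib, ← Finset.sum_sub_distrib,
        ← Finset.sum_add_distrib]
      refine Finset.sum_congr rfl fun l _ => ?_
      simp only [Derivation.leibniz, Derivation.leibniz_pow, map_add, map_neg, smul_eq_mul,
        nsmul_eq_mul, hz, hw, Nat.add_sub_cancel]
      push_cast
      ring
    rw [hsum, hzz, hwz]
    ring
  have hlap : lapC (w * z ^ m) = 0 := by
    rw [lapC_mul, hlw, lapC_pow_eq_zero hlz hzz, gradInner_pow_right, hwz]
    ring
  simp only [navierC, hdiv]
  rw [lapC_add, lapC_mul_pderiv _ _ hz, lapC_mul_pderiv _ _ hw, lapC_neg, hlap,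
    lapC_pow_eq_zero hlz hzz]
  simp

/-- for pairwise distinct `p, q, r, s` and `k ≥ 1`, the tuple
`u = −(x_r + i x_s)(x_p + i x_q)^{k−1}·(ς_p + i ς_q) + (x_p + i x_q)^k·(ς_r + i ς_s)`
satisfies the complex Navier equations. -/
theorem navier_solution_v2 (n : ℕ) (hn : 4 ≤ n) (b : ℝ) (hb : b ≠ 0)
    (hb1 : 0 < b + 1) (p q r s : Fin n)
    (hpq : p ≠ q) (hpr : p ≠ r) (hps : p ≠ s) (hqr : q ≠ r) (hqs : q ≠ s)
    (hrs : r ≠ s) (k : ℕ) (hk : 1 ≤ k) :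
    ∀ j, navierC b
      (fun l =>
        -((X r + C Complex.I * X s) * (X p + C Complex.I * X q) ^ (k - 1)) *
            (sigmaV p l + C Complex.I * sigmaV q l)
          + (X p + C Complex.I * X q) ^ k *
            (sigmaV r l + C Complex.I * sigmaV s l)) j = 0 := by
  obtain ⟨m, rfl⟩ : ∃ m, k = m + 1 := ⟨k - 1, by omega⟩
  simp only [Nat.add_sub_cancel, ← pderiv_X_add_I_mul_X]
  refine navierC_isotropic_eq_zero b ?_ ?_ ?_ ?_ m
  · simp [pderiv_X_add_I_mul_X, pderiv_sigmaV]
  · simp [pderiv_X_add_I_mul_X, pderiv_sigmaV]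
  · simp [gradInner_X_add_I_mul_X, sigmaV, hpq, hpq.symm]
  · simp [gradInner_X_add_I_mul_X, sigmaV, hpr.symm, hps.symm, hqr.symm, hqs.symm]
end
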